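/- Let R be a commutative semiring, π ∈ R^{n×n} an idempotent matrix with image M_π ⊆ R^n, and let ε_π : M_π ⊗_R M_π^∨ → R be the evaluation map m ⊗ χ ↦ χ(m) and η_π : R → M_π ⊗_R M_π^∨ the map sending 1 to Σᵢ p(eᵢ) ⊗ (eᵢ^∨ ∘ s), where p : R^n → M_π is π with restricted codomain, s : M_π → R^n is the inclusion, and eᵢ, eᵢ^∨ are the standard basis and dual basis of R^n. Then: (1) ε_π is surjective if and only if the entries π_{ij} generate the unit ideal of R; (2) η_π is surjective if and only if there exists a matrix z ∈ R^{n×n} with z_{ij} π_{kl} = π_{kj} π_{il} for all i, j, k, l; (3) if both ε_π and η_π are surjective, then π_{ij} π_{kl} = π_{il} π_{kj} for all i, j, k, l (all 2×2 submatrices of π are singular). -/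

import Mathlib

/-!
Write `m_j = p(e_j)` and `χ_i = e_i^∨ ∘ s`, so that `χ_i(m_j) = π i j`. Since `π` is idempotent,
every `m` in `M_π` equals `∑ j, m j • m_j` and every functional `χ` equals `∑ i, χ(m_i) • χ_i`.

The values of `ε_π` are therefore combinations of the entries `π i j`, all of which are attained;
this is (1).

The same expansions show that `M_π ⊗ M_π^∨` is spanned by the `m_j ⊗ χ_i`, and that the map
`M_π ⊗ M_π^∨ → R^{n×n}` sending `m ⊗ χ` to the matrix `m a * χ(m_b)` is injective
(`tensorToMatrix_injective`). It sends `η_π(r)` to `r • π` and `m_j ⊗ χ_i` to the matrix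
`π a j * π i b`, so `η_π` is onto iff each of the latter matrices is a multiple `z i j • π`;
this is (2).

For (3) let `t` be the trace of `π`. Multiplying the relation for `z` by `π` and cancelling by
means of the unit ideal (`eq_of_mul_eq_of_span_eq_top`) gives `z * π = z`, while contracting the
relation gives `z * π = t • π`; hence `t * (π i j * π k l) = π k j * π i l`. In particular
`t * (π i j)^2 = (π i j)^2`, and as the squares of the entries again generate the unit ideal, `t = 1`.
-/

/-!
For an idempotent matrix `π` over a commutative semiring with image `M_π`, we study
the counit (evaluation) map `ε_π : M_π ⊗ M_π^∨ → R` and the unit map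
`η_π : R → M_π ⊗ M_π^∨`, `1 ↦ Σᵢ p(eᵢ) ⊗ (eᵢ^∨ ∘ s)`:
(1) `ε_π` is surjective iff the entries of `π` generate the unit ideal;
(2) `η_π` is surjective iff there is a matrix `z` with `z i j * π k l = π k j * π i l`;
(3) if both are surjective then all 2×2 submatrices of `π` are singular.
-/

universe u

open TensorProduct

variable (R : Type u) [CommSemiring R]

/-- The image `M_π ⊆ R^n` of the idempotent matrix `π`. -/
noncomputable def Mpi {n : ℕ} (π : Matrix (Fin n) (Fin n) R) : Submodule R (Fin n → R) :=
  LinearMap.range π.mulVecLin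

/-- The counit (evaluation) map `ε_π : M_π ⊗ M_π^∨ → R`, `m ⊗ χ ↦ χ m`. -/
noncomputable def epsPi {n : ℕ} (π : Matrix (Fin n) (Fin n) R) :
    (↥(Mpi R π) ⊗[R] (↥(Mpi R π) →ₗ[R] R)) →ₗ[R] R :=
  TensorProduct.lift (LinearMap.id : (↥(Mpi R π) →ₗ[R] R) →ₗ[R] (↥(Mpi R π) →ₗ[R] R)).flip

/-- The unit map `η_π : R → M_π ⊗ M_π^∨` sending `1` to `Σᵢ p(eᵢ) ⊗ (eᵢ^∨ ∘ s)`,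
where `p : R^n → M_π` is `π` with restricted codomain and `s : M_π → R^n` is the
inclusion. -/
noncomputable def etaPi {n : ℕ} (π : Matrix (Fin n) (Fin n) R) :
    R →ₗ[R] (↥(Mpi R π) ⊗[R] (↥(Mpi R π) →ₗ[R] R)) :=
  LinearMap.toSpanSingleton R _
    (∑ i : Fin n,
      (π.mulVecLin.rangeRestrict (Pi.single i 1)) ⊗ₜ[R]
        ((LinearMap.proj i).comp (Mpi R π).subtype))

variable {R} in
/-- Equality of two scalars may be tested after multiplication by a family generating the unit
ideal: over a semiring, `{r | a * r = b * r}` is still an ideal. -/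
theorem eq_of_mul_eq_of_span_eq_top {s : Set R} (hs : Ideal.span s = ⊤) {a b : R}
    (h : ∀ r ∈ s, a * r = b * r) : a = b := by
  have key : ∀ r ∈ Ideal.span s, a * r = b * r := by
    intro r hr
    induction hr using Submodule.span_induction with
    | mem x hx => exact h x hx
    | zero => simp
    | add x y _ _ hx hy => rw [mul_add, mul_add, hx, hy]
    | smul c x _ hx => rw [smul_eq_mul, mul_left_comm, hx, mul_left_comm]
  simpa using key 1 (by rw [hs]; trivial)

section

variable {n : ℕ} (π : Matrix (Fin n) (Fin n) R)

/-- The generator `m_j = p(e_j)` of `M_π`, that is, the `j`-th column of `π`. -/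
noncomputable def piCol (j : Fin n) : ↥(Mpi R π) :=
  π.mulVecLin.rangeRestrict (Pi.single j 1)

/-- The functional `χ_i = e_i^∨ ∘ s` on `M_π`, that is, the `i`-th coordinate. -/
noncomputable def piCoord (i : Fin n) : ↥(Mpi R π) →ₗ[R] R :=
  (LinearMap.proj i).comp (Mpi R π).subtype

/-- The map `M_π ⊗ M_π^∨ → R^{n×n}` sending `m ⊗ χ` to the matrix with entries `m a * χ(m_b)`. -/
noncomputable def tensorToMatrix :
    (↥(Mpi R π) ⊗[R] (↥(Mpi R π) →ₗ[R] R)) →ₗ[R] (Fin n → Fin n → R) :=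
  LinearMap.pi fun a => LinearMap.pi fun b =>
    TensorProduct.lift ((LinearMap.mul R R).compl₁₂ (piCoord R π a)
      (LinearMap.applyₗ (piCol R π b)))

theorem piCol_apply (i j : Fin n) : (piCol R π j : Fin n → R) i = π i j := by
  simp [piCol]

theorem piCoord_apply (i : Fin n) (m : ↥(Mpi R π)) : piCoord R π i m = (m : Fin n → R) i := rfl

theorem epsPi_tmul (m : ↥(Mpi R π)) (χ : ↥(Mpi R π) →ₗ[R] R) :
    epsPi R π (m ⊗ₜ[R] χ) = χ m := by
  simp [epsPi]

theorem tensorToMatrix_tmul (m : ↥(Mpi R π)) (χ : ↥(Mpi R π) →ₗ[R] R) (a b : Fin n) :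
    tensorToMatrix R π (m ⊗ₜ[R] χ) a b = (m : Fin n → R) a * χ (piCol R π b) := by
  simp [tensorToMatrix, piCoord_apply]

theorem etaPi_apply (r : R) :
    etaPi R π r = r • ∑ i, piCol R π i ⊗ₜ[R] piCoord R π i := rfl

/-- Elements of `M_π` are fixed by `π`, hence are expanded in the columns of `π` with their own
coordinates as coefficients. -/
theorem eq_sum_piCol (hπ : π * π = π) (m : ↥(Mpi R π)) :
    m = ∑ j, (m : Fin n → R) j • piCol R π j := by
  obtain ⟨_, v, rfl⟩ := m
  apply Subtype.ext
  funext i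
  have h : π.mulVec (π.mulVec v) = π.mulVec v := by rw [Matrix.mulVec_mulVec, hπ]
  have hi := congrFun h i
  simp only [Matrix.mulVecLin_apply, AddSubmonoidClass.coe_finsetSum, Finset.sum_apply,
    SetLike.val_smul, Pi.smul_apply, piCol_apply, smul_eq_mul]
  rw [← hi]
  simp only [Matrix.mulVec, dotProduct]
  exact Finset.sum_congr rfl fun j _ => mul_comm _ _

theorem eq_sum_piCoord (hπ : π * π = π) (χ : ↥(Mpi R π) →ₗ[R] R) :
    χ = ∑ i, χ (piCol R π i) • piCoord R π i := by
  ext m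
  conv_lhs => rw [eq_sum_piCol R π hπ m]
  simp [piCoord_apply, mul_comm]

/-- A tensor is recovered from its matrix, so the `m_a ⊗ χ_b` span `M_π ⊗ M_π^∨`. -/
theorem eq_sum_tensorToMatrix (hπ : π * π = π) (x : ↥(Mpi R π) ⊗[R] (↥(Mpi R π) →ₗ[R] R)) :
    x = ∑ a, ∑ b, tensorToMatrix R π x a b • (piCol R π a ⊗ₜ[R] piCoord R π b) := by
  induction x using TensorProduct.induction_on with
  | zero => simp
  | tmul m χ =>
    conv_lhs => rw [eq_sum_piCol R π hπ m, eq_sum_piCoord R π hπ χ]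
    simp only [TensorProduct.sum_tmul, TensorProduct.tmul_sum, TensorProduct.smul_tmul_smul,
      tensorToMatrix_tmul]
    exact Finset.sum_comm
  | add x y hx hy =>
    conv_lhs => rw [hx, hy]
    simp only [map_add, Pi.add_apply, add_smul, Finset.sum_add_distrib]

theorem tensorToMatrix_injective (hπ : π * π = π) :
    Function.Injective (tensorToMatrix R π) := by
  intro x y h
  rw [eq_sum_tensorToMatrix R π hπ x, eq_sum_tensorToMatrix R π hπ y, h]

theorem tensorToMatrix_etaPi (hπ : π * π = π) (r : R) (a b : Fin n) :
    tensorToMatrix R π (etaPi R π r) a b = r * π a b := by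
  have h := congrFun (congrFun hπ a) b
  rw [Matrix.mul_apply] at h
  simp [etaPi_apply, tensorToMatrix_tmul, piCoord_apply, piCol_apply, h]

theorem tensorToMatrix_piCol_piCoord (i j a b : Fin n) :
    tensorToMatrix R π (piCol R π j ⊗ₜ[R] piCoord R π i) a b = π a j * π i b := by
  simp [tensorToMatrix_tmul, piCoord_apply, piCol_apply]

theorem epsPi_surjective_iff (hπ : π * π = π) :
    Function.Surjective (epsPi R π) ↔
      Ideal.span (Set.range fun p : Fin n × Fin n => π p.1 p.2) = ⊤ := by
  have hrange : LinearMap.range (epsPi R π) =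
      Ideal.span (Set.range fun p : Fin n × Fin n => π p.1 p.2) := by
    apply le_antisymm
    · rintro _ ⟨x, rfl⟩
      rw [eq_sum_tensorToMatrix R π hπ x]
      simp only [map_sum, map_smul, epsPi_tmul, piCoord_apply, piCol_apply]
      exact Submodule.sum_mem _ fun a _ => Submodule.sum_mem _ fun b _ =>
        Submodule.smul_mem _ _ (Submodule.subset_span ⟨(b, a), rfl⟩)
    · refine Submodule.span_le.2 ?_
      rintro _ ⟨⟨i, j⟩, rfl⟩
      exact ⟨piCol R π j ⊗ₜ[R] piCoord R π i, by
        rw [epsPi_tmul, piCoord_apply, piCol_apply]⟩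
  rw [← LinearMap.range_eq_top, hrange]

theorem etaPi_surjective_iff (hπ : π * π = π) :
    Function.Surjective (etaPi R π) ↔
      ∃ z : Matrix (Fin n) (Fin n) R, ∀ i j k l : Fin n, z i j * π k l = π k j * π i l := by
  constructor
  · intro h
    choose z hz using fun i j => h (piCol R π j ⊗ₜ[R] piCoord R π i)
    refine ⟨z, fun i j k l => ?_⟩
    rw [← tensorToMatrix_etaPi R π hπ, hz, tensorToMatrix_piCol_piCoord]
  · rintro ⟨z, hz⟩
    have hgen : ∀ i j, etaPi R π (z i j) = piCol R π j ⊗ₜ[R] piCoord R π i := by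
      intro i j
      apply tensorToMatrix_injective R π hπ
      funext k l
      rw [tensorToMatrix_etaPi R π hπ, tensorToMatrix_piCol_piCoord, hz]
    intro x
    refine ⟨∑ a, ∑ b, tensorToMatrix R π x a b • z b a, ?_⟩
    conv_rhs => rw [eq_sum_tensorToMatrix R π hπ x]
    simp only [map_sum, map_smul, hgen]

variable {R π} in
/-- The matrix `z` of the second criterion is forced to be `tr π • π` once the entries of `π`
generate the unit ideal. -/
theorem eq_trace_mul (hπ : π * π = π)
    (hs : Ideal.span (Set.range fun p : Fin n × Fin n => π p.1 p.2) = ⊤)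
    {z : Matrix (Fin n) (Fin n) R} (hz : ∀ i j k l : Fin n, z i j * π k l = π k j * π i l)
    (i j : Fin n) : z i j = π.trace * π i j := by
  have h1 : z i j = (z * π) i j := by
    apply eq_of_mul_eq_of_span_eq_top hs
    rintro _ ⟨⟨k, l⟩, rfl⟩
    have h := congrFun (congrFun hπ k) j
    rw [Matrix.mul_apply] at h
    rw [hz, Matrix.mul_apply, Finset.sum_mul, ← h, Finset.sum_mul]
    refine Finset.sum_congr rfl fun m _ => ?_
    rw [mul_right_comm, mul_right_comm (z i m), hz]
  rw [h1, Matrix.mul_apply, Matrix.trace, Finset.sum_mul]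
  exact Finset.sum_congr rfl fun m _ => hz i m m j

variable {R π} in
/-- Holds because the trace fixes each square `(π i j)^2`, and these again generate the unit
ideal. -/
theorem trace_eq_one (hπ : π * π = π)
    (hs : Ideal.span (Set.range fun p : Fin n × Fin n => π p.1 p.2) = ⊤)
    {z : Matrix (Fin n) (Fin n) R} (hz : ∀ i j k l : Fin n, z i j * π k l = π k j * π i l) :
    π.trace = 1 := by
  apply eq_of_mul_eq_of_span_eq_top (Ideal.span_pow_eq_top _ hs 2)
  rintro _ ⟨_, ⟨⟨i, j⟩, rfl⟩, rfl⟩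
  have h := hz i j i j
  rw [eq_trace_mul hπ hs hz] at h
  simpa [pow_two, mul_assoc] using h

end

/-- Surjectivity criteria for the unit and counit of the image of an idempotent
matrix `π` over a commutative semiring. -/
theorem epsPi_etaPi_surjectivity (n : ℕ) (π : Matrix (Fin n) (Fin n) R)
    (hπ : π * π = π) :
    (Function.Surjective (epsPi R π) ↔
      Ideal.span (Set.range fun p : Fin n × Fin n => π p.1 p.2) = ⊤) ∧
    (Function.Surjective (etaPi R π) ↔
      ∃ z : Matrix (Fin n) (Fin n) R, ∀ i j k l : Fin n,
        z i j * π k l = π k j * π i l) ∧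
    (Function.Surjective (epsPi R π) → Function.Surjective (etaPi R π) →
      ∀ i j k l : Fin n, π i j * π k l = π i l * π k j) := by
  refine ⟨epsPi_surjective_iff R π hπ, etaPi_surjective_iff R π hπ, fun hε hη i j k l => ?_⟩
  have hs := (epsPi_surjective_iff R π hπ).1 hε
  obtain ⟨z, hz⟩ := (etaPi_surjective_iff R π hπ).1 hη
  rw [mul_comm (π i l), ← hz, eq_trace_mul hπ hs hz, trace_eq_one hπ hs hz, one_mul]
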